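/- (Proposition 3.4, upper bound of Henrot–Lemenant–Lucardesi type.) Let Ω ⊆ ℝ² be a bounded open set with area A := |Ω| > 0 and minimal width w := w(Ω). Then μ₁(Ω) ≤ π²·w²/A². -/

import Mathlib

open MeasureTheory Filter Set Real RealInnerProductSpace

noncomputable section

abbrev E2 : Type := EuclideanSpace ℝ (Fin 2)

/-- First Dirichlet eigenvalue, variational characterization. -/
noncomputable def dEig1 (Ω : Set E2) : ℝ :=
  sInf { R : ℝ | ∃ u : E2 → ℝ, ContDiff ℝ (⊤ : ℕ∞) u ∧ HasCompactSupport u ∧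
    tsupport u ⊆ Ω ∧ (∫ x, (u x)^2) ≠ 0 ∧
    R = (∫ x, ‖fderiv ℝ u x‖^2) / (∫ x, (u x)^2) }

/-- First nontrivial Neumann eigenvalue, variational characterization. -/
noncomputable def nEig1 (Ω : Set E2) : ℝ :=
  sInf { R : ℝ | ∃ u : E2 → ℝ, ContDiff ℝ (⊤ : ℕ∞) u ∧ (∫ x in Ω, u x) = 0 ∧
    (∫ x in Ω, (u x)^2) ≠ 0 ∧
    R = (∫ x in Ω, ‖fderiv ℝ u x‖^2) / (∫ x in Ω, (u x)^2) }

/-- The open unit disc in the plane. -/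
def unitDisc : Set E2 := Metric.ball 0 1

/-- The minimal width of a bounded plane set: the infimum over unit directions `ξ` of the
width of the smallest strip orthogonal to `ξ` enclosing the set. -/
noncomputable def minWidth (Ω : Set E2) : ℝ :=
  sInf { w : ℝ | ∃ ξ : E2, ‖ξ‖ = 1 ∧
    w = sSup { r : ℝ | ∃ x ∈ Ω, r = ⟪x, ξ⟫ } - sInf { r : ℝ | ∃ x ∈ Ω, r = ⟪x, ξ⟫ } }


open Topology in
lemma pit (m : Measure ℝ) [IsFiniteMeasure m] (W : ℝ) (hW : 0 ≤ W)
    (hP : ∀ a b, a ≤ b → m.real (Iic b) - m.real (Iic a) ≤ W * (b - a)) :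
    LipschitzWith W.toNNReal (fun t => m.real (Iic t)) ∧
    m.map (fun t => m.real (Iic t)) = volume.restrict (Icc 0 (m.real univ)) := by
  set P : ℝ → ℝ := fun t => m.real (Iic t) with hPdef
  have mono : Monotone P := fun a b h => measureReal_mono (Iic_subset_Iic.2 h)
  have lip : LipschitzWith W.toNNReal P := by
    apply LipschitzWith.of_le_add_mul
    intro x y
    rw [Real.coe_toNNReal _ hW, Real.dist_eq]
    rcases le_total x y with h | h
    · have := mono h
      have := mul_nonneg hW (abs_nonneg (x - y))
      linarith
    · have := hP y x h
      rw [abs_of_nonneg (by linarith)]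
      simp only [hPdef]; linarith
  refine ⟨lip, ?_⟩
  have hc := lip.continuous
  have h0 : Tendsto P atBot (𝓝 0) := by
    have h := tendsto_measure_iInter_atBot (μ := m) (s := fun t : ℝ => Iic t)
      (fun t => measurableSet_Iic.nullMeasurableSet) (fun a b hab => Iic_subset_Iic.2 hab)
      ⟨0, measure_ne_top _ _⟩
    have e : ⋂ t : ℝ, Iic t = ∅ := iInter_Iic_eq_empty_iff.2 (by
      intro ⟨b, hb⟩
      have := hb ⟨b - 1, rfl⟩
      linarith)
    rw [e, measure_empty] at h
    have := (ENNReal.tendsto_toReal (a := 0) (by simp)).comp h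
    rw [ENNReal.toReal_zero] at this
    exact this
  have h1 : Tendsto P atTop (𝓝 (m.real univ)) := by
    exact (ENNReal.tendsto_toReal (measure_ne_top m univ)).comp (tendsto_measure_Iic_atTop m)
  have : IsFiniteMeasure (volume.restrict (Icc 0 (m.real univ))) := inferInstance
  have : IsFiniteMeasure (m.map P) := inferInstance
  apply Measure.ext_of_Iic
  intro s
  rw [Measure.map_apply hc.measurable measurableSet_Iic, Measure.restrict_apply measurableSet_Iic]
  have hPn : ∀ t, 0 ≤ P t := fun t => measureReal_nonneg
  have hPA : ∀ t, P t ≤ m.real univ := fun t => measureReal_mono (subset_univ _)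
  rcases lt_or_ge s 0 with hs | hs
  · have e1 : P ⁻¹' Iic s = ∅ := by
      ext t; simp only [mem_preimage, mem_Iic, mem_empty_iff_false, iff_false, not_le]
      exact lt_of_lt_of_le hs (hPn t)
    have e2 : Iic s ∩ Icc 0 (m.real univ) = ∅ := by
      ext t; simp only [mem_inter_iff, mem_Iic, mem_Icc, mem_empty_iff_false, iff_false]
      intro h; linarith [h.2.1, h.1]
    rw [e1, e2]; simp
  rcases le_or_gt (m.real univ) s with hA | hA
  · have e1 : P ⁻¹' Iic s = univ := by
      ext t; simp only [mem_preimage, mem_Iic, mem_univ, iff_true]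
      exact (hPA t).trans hA
    have e2 : Iic s ∩ Icc 0 (m.real univ) = Icc 0 (m.real univ) := by
      apply inter_eq_right.2
      intro t ht; exact ht.2.trans hA
    rw [e1, e2]; simp
  · have e2 : Iic s ∩ Icc 0 (m.real univ) = Icc 0 s := by
      ext t; simp only [mem_inter_iff, mem_Iic, mem_Icc]
      constructor
      · rintro ⟨a, b, c⟩; exact ⟨b, a⟩
      · rintro ⟨a, b⟩; exact ⟨b, a, by linarith⟩
    rw [e2, Real.volume_Icc, sub_zero, ← ofReal_measureReal]
    congr 1
    apply le_antisymm
    · rcases (P ⁻¹' Iic s).eq_empty_or_nonempty with he | hne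
      · rw [he]; simpa using hs
      · obtain ⟨T, hT⟩ := (h1.eventually (lt_mem_nhds hA)).exists
        have bdd : BddAbove (P ⁻¹' Iic s) := by
          refine ⟨T, fun t ht => ?_⟩
          by_contra! h
          have := mono h.le
          simp only [mem_preimage, mem_Iic] at ht
          linarith
        have hcl : IsClosed (P ⁻¹' Iic s) := isClosed_Iic.preimage hc
        have hm := hcl.csSup_mem hne bdd
        have : P ⁻¹' Iic s ⊆ Iic (sSup (P ⁻¹' Iic s)) := fun t ht => le_csSup bdd ht
        exact (measureReal_mono this).trans hm
    · rcases hs.eq_or_lt with rfl | hs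
      · exact measureReal_nonneg
      obtain ⟨T, hT⟩ := (h1.eventually (lt_mem_nhds hA)).exists
      obtain ⟨Tlow, hTlow⟩ := (h0.eventually (gt_mem_nhds hs)).exists
      obtain ⟨t, ht⟩ := mem_range_of_exists_le_of_exists_ge hc ⟨Tlow, hTlow.le⟩ ⟨T, hT.le⟩
      rw [← ht]
      have hsub : Iic t ⊆ P ⁻¹' Iic (P t) := fun r hr => mono hr
      exact measureReal_mono hsub

open Topology in
lemma mollify (P : ℝ → ℝ) (W : ℝ) (hW : 0 ≤ W) (lip : LipschitzWith W.toNNReal P) :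
    ∃ Q : ℕ → ℝ → ℝ, (∀ n, ContDiff ℝ (⊤ : ℕ∞) (Q n)) ∧ (∀ n t, |deriv (Q n) t| ≤ W) ∧
      ∀ t, Tendsto (fun n => Q n t) atTop (𝓝 (P t)) := by
  let φ : ℕ → ContDiffBump (0:ℝ) := fun n =>
    ⟨1 / (n + 1) / 2, 1 / (n+1), by positivity, half_lt_self (by positivity)⟩
  have hint : ∀ n t, Integrable (fun s => (φ n).normed volume s * P (t - s)) volume := by
    intro n t
    apply Continuous.integrable_of_hasCompactSupport
    · exact (φ n).continuous_normed.mul (lip.continuous.comp (by fun_prop))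
    · exact (φ n).hasCompactSupport_normed.mul_right
  refine ⟨fun n => convolution ((φ n).normed volume) P (ContinuousLinearMap.lsmul ℝ ℝ) volume, ?_, ?_, ?_⟩
  · intro n
    exact (φ n).hasCompactSupport_normed.contDiff_convolution_left _ (φ n).contDiff_normed
      lip.continuous.locallyIntegrable
  · intro n t
    have : LipschitzWith W.toNNReal (convolution ((φ n).normed volume) P (ContinuousLinearMap.lsmul ℝ ℝ) volume) := by
      apply LipschitzWith.of_dist_le_mul
      intro x y
      rw [Real.coe_toNNReal _ hW, Real.dist_eq]
      simp only [convolution, ContinuousLinearMap.lsmul_apply, smul_eq_mul]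
      rw [← integral_sub (hint n x) (hint n y), ← Real.norm_eq_abs]
      have hi := (φ n).integral_normed (μ := volume)
      calc _ ≤ ∫ s, (φ n).normed volume s * (W * dist x y) := by
            apply norm_integral_le_of_norm_le
            · exact (φ n).integrable_normed.mul_const _
            · refine Eventually.of_forall fun s => ?_
              rw [← mul_sub, norm_mul, Real.norm_of_nonneg ((φ n).nonneg_normed s)]
              apply mul_le_mul_of_nonneg_left _ ((φ n).nonneg_normed s)
              have := lip.dist_le_mul (x - s) (y - s)
              rw [Real.coe_toNNReal _ hW, dist_sub_right, Real.dist_eq] at this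
              exact this
        _ = _ := by rw [integral_mul_const, hi, one_mul]
    have := norm_deriv_le_of_lipschitz this (x₀ := t)
    rwa [Real.coe_toNNReal _ hW] at this
  · intro t
    apply ContDiffBump.convolution_tendsto_right_of_continuous _ lip.continuous
    exact tendsto_one_div_add_atTop_nhds_zero_nat

open Topology in
lemma oneD (m : Measure ℝ) [IsFiniteMeasure m] (W : ℝ) (hW : 0 ≤ W) (hA : 0 < m.real univ)
    (hP : ∀ a b, a ≤ b → m.real (Iic b) - m.real (Iic a) ≤ W * (b - a)) (c : ℝ)
    (hc : ∀ g : ℝ → ℝ, ContDiff ℝ (⊤ : ℕ∞) g → ∫ t, g t ∂m = 0 → ∫ t, g t ^ 2 ∂m ≠ 0 →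
      c ≤ (∫ t, (deriv g t)^2 ∂m) / ∫ t, g t ^ 2 ∂m) :
    c ≤ π ^ 2 * W ^ 2 / m.real univ ^ 2 := by
  obtain ⟨lip, hmap⟩ := pit m W hW hP
  set P : ℝ → ℝ := fun t => m.real (Iic t) with hPdef
  set A := m.real univ with hAdef
  obtain ⟨Q, hQs, hQd, hQt⟩ := mollify P W hW lip
  have push : ∀ f : ℝ → ℝ, Continuous f → ∫ t, f (P t) ∂m = ∫ s in (0:ℝ)..A, f s := by
    intro f hf
    rw [intervalIntegral.integral_of_le hA.le, ← integral_Icc_eq_integral_Ioc, ← hmap,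
      integral_map lip.continuous.measurable.aemeasurable hf.aestronglyMeasurable]
  have lim : ∀ f : ℝ → ℝ, Continuous f → (∀ s, |f s| ≤ 1) →
      Tendsto (fun n => ∫ t, f (Q n t) ∂m) atTop (𝓝 (∫ s in (0:ℝ)..A, f s)) := by
    intro f hf hb
    rw [← push f hf]
    apply tendsto_integral_of_dominated_convergence (fun _ => 1)
    · intro n; exact (hf.comp (hQs n).continuous).aestronglyMeasurable
    · exact integrable_const _
    · intro n; exact Eventually.of_forall fun t => hb _
    · exact Eventually.of_forall fun t => (hf.tendsto _).comp (hQt t)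
  set k := π / A with hk
  have hkA : k * A = π := by rw [hk]; field_simp
  have hkpos : 0 < k := by positivity
  have I1 : ∫ s in (0:ℝ)..A, cos (k * s) = 0 := by
    rw [intervalIntegral.integral_comp_mul_left _ hkpos.ne']; simp [hkA]
  have I2 : ∫ s in (0:ℝ)..A, cos (k * s) ^ 2 = A / 2 := by
    rw [intervalIntegral.integral_comp_mul_left (fun x => cos x ^ 2) hkpos.ne', hkA, mul_zero,
      integral_cos_sq]
    simp [hk]; field_simp
  have I3 : ∫ s in (0:ℝ)..A, sin (k * s) ^ 2 = A / 2 := by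
    rw [intervalIntegral.integral_comp_mul_left (fun x => sin x ^ 2) hkpos.ne', hkA, mul_zero,
      integral_sin_sq]
    simp [hk]; field_simp
  have L1 := lim (fun s => cos (k * s)) (by fun_prop) (fun s => abs_cos_le_one _)
  have L2 := lim (fun s => cos (k * s) ^ 2) (by fun_prop) (fun s => by
    rw [abs_of_nonneg (sq_nonneg _)]; exact cos_sq_le_one _)
  have L3 := lim (fun s => sin (k * s) ^ 2) (by fun_prop) (fun s => by
    rw [abs_of_nonneg (sq_nonneg _)]; exact sin_sq_le_one _)
  rw [I1] at L1
  rw [I2] at L2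
  rw [I3] at L3
  have LD : Tendsto (fun n => (∫ t, cos (k * Q n t) ^ 2 ∂m) - (∫ t, cos (k * Q n t) ∂m) ^ 2 / A)
      atTop (𝓝 (A / 2)) := by
    have := L2.sub ((L1.pow 2).div_const A)
    simpa using this
  have LR := (L3.const_mul (k ^ 2 * W ^ 2)).div LD (by positivity)
  have e : k ^ 2 * W ^ 2 * (A / 2) / (A / 2) = π ^ 2 * W ^ 2 / A ^ 2 := by
    rw [hk]; field_simp
  rw [e] at LR
  apply ge_of_tendsto LR
  filter_upwards [LD.eventually (lt_mem_nhds (half_pos hA))] with n hn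
  have hQc := (hQs n).continuous
  set a := (∫ t, cos (k * Q n t) ∂m) / A with ha
  set g : ℝ → ℝ := fun t => cos (k * Q n t) - a with hg
  have i1 : Integrable (fun t => cos (k * Q n t)) m :=
    Integrable.of_bound (by fun_prop) 1 (Eventually.of_forall fun t => abs_cos_le_one _)
  have i2 : Integrable (fun t => cos (k * Q n t) ^ 2) m :=
    Integrable.of_bound (by fun_prop) 1 (Eventually.of_forall fun t => by
      rw [Real.norm_eq_abs, abs_of_nonneg (sq_nonneg _)]; exact cos_sq_le_one _)
  have i3 : Integrable (fun t => sin (k * Q n t) ^ 2) m :=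
    Integrable.of_bound (by fun_prop) 1 (Eventually.of_forall fun t => by
      rw [Real.norm_eq_abs, abs_of_nonneg (sq_nonneg _)]; exact sin_sq_le_one _)
  have aA : a * A = ∫ t, cos (k * Q n t) ∂m := by rw [ha]; field_simp
  have g0 : ∫ t, g t ∂m = 0 := by
    rw [hg, integral_sub i1 (integrable_const _), integral_const, smul_eq_mul, ← aA]; ring
  have g2 : ∫ t, g t ^ 2 ∂m =
      (∫ t, cos (k * Q n t) ^ 2 ∂m) - (∫ t, cos (k * Q n t) ∂m) ^ 2 / A := by
    have : ∀ t, g t ^ 2 = cos (k * Q n t) ^ 2 - (2 * a) * cos (k * Q n t) + a ^ 2 := by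
      intro t; simp only [hg]; ring
    simp_rw [this]
    have i4 : Integrable (fun t => cos (k * Q n t) ^ 2 - (2 * a) * cos (k * Q n t)) m :=
      i2.sub (i1.const_mul _)
    rw [integral_add i4 (integrable_const _),
      integral_sub i2 (i1.const_mul _), integral_const_mul, integral_const, smul_eq_mul, ← aA]
    field_simp
    ring
  have gs : ContDiff ℝ (⊤ : ℕ∞) g := by
    have := hQs n
    exact (Real.contDiff_cos.comp (contDiff_const.mul this)).sub contDiff_const
  have key := hc g gs g0 (by rw [g2]; exact hn.ne')
  rw [g2] at key
  refine key.trans ?_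
  apply div_le_div_of_nonneg_right _ hn.le
  show _ ≤ k ^ 2 * W ^ 2 * ∫ t, sin (k * Q n t) ^ 2 ∂m
  rw [← integral_const_mul]
  apply integral_mono_of_nonneg (Eventually.of_forall fun t => sq_nonneg _) (i3.const_mul _)
  refine Eventually.of_forall fun t => ?_
  have hd : HasDerivAt (Q n) (deriv (Q n) t) t :=
    (((hQs n).differentiable (by simp)) t).hasDerivAt
  have hd2 : deriv g t = -sin (k * Q n t) * (k * deriv (Q n) t) :=
    (((hd.const_mul k).cos).sub_const a).deriv
  have hq : deriv (Q n) t ^ 2 ≤ W ^ 2 := by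
    rw [← sq_abs]; exact pow_le_pow_left₀ (abs_nonneg _) (hQd n t) 2
  show deriv g t ^ 2 ≤ k ^ 2 * W ^ 2 * sin (k * Q n t) ^ 2
  rw [hd2]
  have := mul_le_mul_of_nonneg_left hq (by positivity : 0 ≤ k ^ 2 * sin (k * Q n t) ^ 2)
  nlinarith [this]

lemma rect (ξ η : E2) (hb : Orthonormal ℝ ![ξ, η]) (p q a b : ℝ) :
    volume {x : E2 | ⟪ξ, x⟫ ∈ Icc p q ∧ ⟪η, x⟫ ∈ Icc a b} = ENNReal.ofReal (q - p) * ENNReal.ofReal (b - a) := by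
  have hcard : Fintype.card (Fin 2) = Module.finrank ℝ E2 := by simp
  let B0 := basisOfOrthonormalOfCardEqFinrank hb hcard
  have hB0 : Orthonormal ℝ B0 := by
    simpa [B0] using hb
  let B : OrthonormalBasis (Fin 2) ℝ E2 := B0.toOrthonormalBasis hB0
  have hB : ∀ i, B i = ![ξ, η] i := by
    intro i; simp [B, B0]
  have mp := (PiLp.volume_preserving_ofLp (Fin 2)).comp B.measurePreserving_repr
  have hm : MeasurableSet (Set.pi univ (fun i : Fin 2 => Icc (![p, a] i) (![q, b] i))) :=
    MeasurableSet.univ_pi fun i => measurableSet_Icc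
  have h := mp.measure_preimage hm.nullMeasurableSet
  have e : {x : E2 | ⟪ξ, x⟫ ∈ Icc p q ∧ ⟪η, x⟫ ∈ Icc a b} =
      (WithLp.ofLp ∘ B.repr) ⁻¹' (Set.pi univ (fun i : Fin 2 => Icc (![p, a] i) (![q, b] i))) := by
    ext x
    simp only [mem_setOf_eq, mem_preimage, Set.mem_pi, mem_univ, true_implies, Fin.forall_fin_two,
      Function.comp_apply, B.repr_apply_apply, hB, Matrix.cons_val_zero, Matrix.cons_val_one]
  rw [e, h, volume_pi_pi]
  simp [Fin.prod_univ_two]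

lemma dir_bound (Ω : Set E2) (hopen : IsOpen Ω)
    (hbd : Bornology.IsBounded Ω) (hA : 0 < (volume Ω).toReal) (ξ : E2) (hξ : ‖ξ‖ = 1) (p q : ℝ)
    (hpq : p ≤ q) (hΩ : ∀ x ∈ Ω, ⟪x, ξ⟫ ∈ Icc p q) :
    nEig1 Ω ≤ π^2 * (q - p)^2 / (volume Ω).toReal^2 := by
  let η : E2 := !₂[-ξ 1, ξ 0]
  have hξ2 : ξ 0 ^ 2 + ξ 1 ^ 2 = 1 := by
    have := EuclideanSpace.real_norm_sq_eq ξ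
    rw [hξ, Fin.sum_univ_two] at this
    linarith
  have hη : ‖η‖ = 1 := by
    rw [EuclideanSpace.norm_eq, Fin.sum_univ_two]
    simp [η]
    linarith
  have hort : ⟪ξ, η⟫ = 0 := by
    simp [η, PiLp.inner_apply, Fin.sum_univ_two]
    ring
  have hb : Orthonormal ℝ ![ξ, η] := by
    constructor
    · intro i; fin_cases i <;> simpa
    · intro i j hij
      fin_cases i <;> fin_cases j <;> simp_all [real_inner_comm]
  have hfin : volume Ω ≠ ⊤ := by
    intro h; rw [h] at hA; simp at hA
  have : IsFiniteMeasure (volume.restrict Ω) := ⟨by simpa using hfin.lt_top⟩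
  let T : E2 → ℝ := fun x => ⟪η, x⟫
  have hT : Continuous T := by fun_prop
  let m : Measure ℝ := (volume.restrict Ω).map T
  have hreal : ∀ s, MeasurableSet s → m.real s = volume.real (T ⁻¹' s ∩ Ω) := by
    intro s hs
    simp only [m, measureReal_def]
    rw [Measure.map_apply hT.measurable hs, Measure.restrict_apply (hT.measurable hs)]
  have hmu : m.real univ = (volume Ω).toReal := by
    rw [hreal _ MeasurableSet.univ]; simp [measureReal_def]
  rw [← hmu]
  apply oneD m (q - p) (by linarith) (by rw [hmu]; exact hA)
  · intro a b hab
    have hr := rect ξ η hb p q a b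
    have hrect : (q - p) * (b - a) =
        volume.real {x : E2 | ⟪ξ, x⟫ ∈ Icc p q ∧ ⟪η, x⟫ ∈ Icc a b} := by
      rw [measureReal_def, hr, ENNReal.toReal_mul, ENNReal.toReal_ofReal (by linarith),
        ENNReal.toReal_ofReal (by linarith)]
    rw [hrect, ← measureReal_sdiff (Iic_subset_Iic.2 hab) measurableSet_Iic,
      hreal _ (measurableSet_Iic.diff measurableSet_Iic)]
    apply measureReal_mono
    · rintro x ⟨⟨h1, h2⟩, h3⟩
      have h4 := hΩ x h3
      rw [real_inner_comm] at h4
      refine ⟨h4, ?_, h1⟩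
      simp only [mem_Iic, not_le] at h2
      exact h2.le
    · rw [hr]
      exact ENNReal.mul_ne_top ENNReal.ofReal_ne_top ENNReal.ofReal_ne_top
  · intro g gs g0 g2
    have hgc := gs.continuous
    have hdc : Continuous (deriv g) := gs.continuous_deriv (by simp)
    have hi : ∀ f : ℝ → ℝ, Continuous f → ∫ t, f t ∂m = ∫ x in Ω, f (T x) := fun f hf =>
      integral_map hT.measurable.aemeasurable hf.aestronglyMeasurable
    rw [hi _ hgc] at g0
    rw [hi (fun t => g t ^ 2) (hgc.pow 2)] at g2 ⊢
    rw [hi (fun t => deriv g t ^ 2) (hdc.pow 2)]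
    apply csInf_le
    · refine ⟨0, ?_⟩
      rintro R ⟨u, -, -, -, rfl⟩
      positivity
    · refine ⟨fun x => g (T x), gs.comp (contDiff_const.inner ℝ contDiff_id), g0, g2, ?_⟩
      congr 1
      apply integral_congr_ae
      refine Eventually.of_forall fun x => ?_
      have h1 : HasFDerivAt T (innerSL ℝ η) x := (innerSL ℝ η).hasFDerivAt
      have h2 : HasDerivAt g (deriv g (T x)) (T x) :=
        (gs.differentiable (by simp) (T x)).hasDerivAt
      have h3 := (h2.comp_hasFDerivAt x h1).fderiv
      have h4 : fderiv ℝ (fun x => g (T x)) x = deriv g (T x) • innerSL ℝ η := h3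
      simp only [h4, norm_smul, innerSL_apply_norm, hη, mul_one, Real.norm_eq_abs, sq_abs]

/-- Henrot–Lemenant–Lucardesi type upper bound: for a bounded open plane set of area `A` and
minimal width `w`, one has `μ₁(Ω) ≤ π² w² / A²`. -/
theorem neumann_le_width_bound (Ω : Set E2) (hopen : IsOpen Ω)
    (hbd : Bornology.IsBounded Ω) (hA : 0 < (volume Ω).toReal) :
    nEig1 Ω ≤ π^2 * (minWidth Ω)^2 / (volume Ω).toReal^2 := by
  have hne : Ω.Nonempty := by
    rw [nonempty_iff_ne_empty]; rintro rfl; simp at hA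
  have hn0 : 0 ≤ nEig1 Ω := by
    apply Real.sInf_nonneg
    rintro R ⟨u, -, -, -, rfl⟩
    positivity
  set A := (volume Ω).toReal with hAdef
  have key : sqrt (nEig1 Ω) * A / π ≤ minWidth Ω := by
    apply le_csInf
    · exact ⟨_, EuclideanSpace.single 0 1, by simp, rfl⟩
    · rintro w ⟨ξ, hξ, rfl⟩
      obtain ⟨C, hC⟩ := hbd.exists_norm_le
      have hb : ∀ x ∈ Ω, |⟪x, ξ⟫| ≤ C := by
        intro x hx
        have := abs_real_inner_le_norm x ξ
        rw [hξ, mul_one] at this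
        exact this.trans (hC x hx)
      have ba : BddAbove { r : ℝ | ∃ x ∈ Ω, r = ⟪x, ξ⟫ } := by
        refine ⟨C, ?_⟩
        rintro r ⟨x, hx, rfl⟩
        exact (abs_le.1 (hb x hx)).2
      have bb : BddBelow { r : ℝ | ∃ x ∈ Ω, r = ⟪x, ξ⟫ } := by
        refine ⟨-C, ?_⟩
        rintro r ⟨x, hx, rfl⟩
        exact (abs_le.1 (hb x hx)).1
      have hI : ∀ x ∈ Ω, ⟪x, ξ⟫ ∈ Icc (sInf { r : ℝ | ∃ x ∈ Ω, r = ⟪x, ξ⟫ })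
          (sSup { r : ℝ | ∃ x ∈ Ω, r = ⟪x, ξ⟫ }) := fun x hx =>
        ⟨csInf_le bb ⟨x, hx, rfl⟩, le_csSup ba ⟨x, hx, rfl⟩⟩
      obtain ⟨x0, hx0⟩ := hne
      have hpq := (hI x0 hx0).1.trans (hI x0 hx0).2
      have h := dir_bound Ω hopen hbd hA ξ hξ _ _ hpq hI
      set W := sSup { r : ℝ | ∃ x ∈ Ω, r = ⟪x, ξ⟫ } - sInf { r : ℝ | ∃ x ∈ Ω, r = ⟪x, ξ⟫ }
      have hW : 0 ≤ W := sub_nonneg.2 hpq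
      have h2 : sqrt (nEig1 Ω) ≤ π * W / A := by
        rw [Real.sqrt_le_left (by positivity)]
        refine h.trans_eq ?_
        ring
      rw [div_le_iff₀ Real.pi_pos]
      rw [le_div_iff₀ hA] at h2
      linarith
  have h3 : sqrt (nEig1 Ω) ≤ π * minWidth Ω / A := by
    rw [div_le_iff₀ Real.pi_pos] at key
    rw [le_div_iff₀ hA]
    linarith
  calc nEig1 Ω = sqrt (nEig1 Ω) ^ 2 := (Real.sq_sqrt hn0).symm
    _ ≤ (π * minWidth Ω / A) ^ 2 := pow_le_pow_left₀ (Real.sqrt_nonneg _) h3 2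
    _ = _ := by ring
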